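/- Let μ be a measure on ℝⁿ with density φ that is (-1/(n-1))-concave. Let A, B ⊂ ℝⁿ be Borel sets such that for some unit vector u, sup_{t∈ℝ} ∫_{A ∩ (u^⊥+tu)} φ = sup_{t∈ℝ} ∫_{B ∩ (u^⊥+tu)} φ (both finite). Then for every λ ∈ [0,1], μ((1-λ)A + λB) ≥ (1-λ)μ(A) + λμ(B). -/

import Mathlib

open MeasureTheory Set Pointwise

open Module
open scoped ENNReal

/-!
Slicing orthogonally to `u` reduces the theorem to the line. Write `F C t` for the `φ`-measure of
the section of `C` at height `t`. The Borell–Brascamp–Lieb inequality in the `(n-1)`-dimensional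
space `uᗮ`, at the critical exponent `-1/(n-1)`, says that the section of `(1 - l) • A + l • B` at
height `(1 - l) * s + l * t` has measure at least `min (F A s) (F B t)`. Hence the superlevel sets
on the line satisfy `(1 - l) • {F A > θ} + l • {F B > θ} ⊆ {F ((1 - l) • A + l • B) > θ}`. Since
`F A` and `F B` have the same supremum, the two sets on the left are nonempty for the same `θ`, so
one-dimensional Brunn–Minkowski applies at every level, and integrating over `θ` gives the claim.

The Borell–Brascamp–Lieb inequality itself is obtained by induction on the dimension, where each
one-dimensional step is the same superlevel argument after normalizing the suprema to `1`.
-/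

variable {l : ℝ}

theorem volume_add_volume_le_volume_add_of_isCompact {K L : Set ℝ}
    (hK : IsCompact K) (hL : IsCompact L) (hKn : K.Nonempty) (hLn : L.Nonempty) :
    volume K + volume L ≤ volume (K + L) := by
  obtain ⟨p, hp, hpK⟩ := hK.exists_isGreatest hKn
  obtain ⟨q, hq, hqL⟩ := hL.exists_isLeast hLn
  -- The translates `q +ᵥ K` and `p +ᵥ L` lie on either side of their only common point `p + q`.
  have hdisj : AEDisjoint volume (q +ᵥ K) (p +ᵥ L) := by
    have hsub : (q +ᵥ K) ∩ (p +ᵥ L) ⊆ {p + q} := by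
      rintro _ ⟨⟨x, hx, rfl⟩, ⟨y, hy, hxy⟩⟩
      have hxp := hpK hx
      have hqy := hqL hy
      simp only [vadd_eq_add, mem_singleton_iff] at hxy ⊢
      linarith
    exact measure_mono_null hsub (measure_singleton _)
  calc volume K + volume L
      = volume ((q +ᵥ K) ∪ (p +ᵥ L)) := by
        rw [measure_union₀ (hL.vadd p).measurableSet.nullMeasurableSet hdisj,
          measure_vadd, measure_vadd]
    _ ≤ volume (K + L) := by
        refine measure_mono (union_subset ?_ ?_)
        · rintro _ ⟨x, hx, rfl⟩
          exact ⟨x, hx, q, hq, add_comm _ _⟩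
        · rintro _ ⟨y, hy, rfl⟩
          exact ⟨p, hp, y, hy, rfl⟩

theorem volume_add_volume_le_volume_add {P Q : Set ℝ} (hP : MeasurableSet P)
    (hQ : MeasurableSet Q) (hPn : P.Nonempty) (hQn : Q.Nonempty) :
    volume P + volume Q ≤ volume (P + Q) := by
  obtain ⟨p, hp⟩ := hPn
  obtain ⟨q, hq⟩ := hQn
  simp only [hP.measure_eq_iSup_isCompact, hQ.measure_eq_iSup_isCompact, iSup_and']
  refine ENNReal.biSup_add_biSup_le' ⟨∅, empty_subset _, isCompact_empty⟩
    ⟨∅, empty_subset _, isCompact_empty⟩ fun K hK L hL ↦ ?_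
  calc volume K + volume L
      ≤ volume (insert p K) + volume (insert q L) := by gcongr <;> exact subset_insert _ _
    _ ≤ volume (insert p K + insert q L) :=
        volume_add_volume_le_volume_add_of_isCompact (hK.2.insert p) (hL.2.insert q)
          (insert_nonempty _ _) (insert_nonempty _ _)
    _ ≤ volume (P + Q) := by
        gcongr
        exacts [insert_subset hp hK.1, insert_subset hq hL.1]

theorem ofReal_mul_volume_add_le_volume_smul_add (hl : l ∈ Icc (0 : ℝ) 1) {P Q : Set ℝ}
    (hP : MeasurableSet P) (hQ : MeasurableSet Q) (hPn : P.Nonempty) (hQn : Q.Nonempty) :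
    ENNReal.ofReal (1 - l) * volume P + ENNReal.ofReal l * volume Q ≤
      volume ((1 - l) • P + l • Q) := by
  simpa [Measure.addHaar_smul, abs_of_nonneg hl.1, abs_of_nonneg (sub_nonneg.2 hl.2)] using
    volume_add_volume_le_volume_add (hP.const_smul₀ (1 - l)) (hQ.const_smul₀ l) hPn.smul_set
      hQn.smul_set

theorem volume_Ioi_inter_ofReal_lt (r : ℝ≥0∞) :
    volume ({θ : ℝ | ENNReal.ofReal θ < r} ∩ Ioi 0) = r := by
  induction r with
  | top => simp
  | coe r =>
    have hIoo : {θ : ℝ | ENNReal.ofReal θ < r} ∩ Ioi 0 = Ioo 0 (r : ℝ) := by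
      ext θ
      simp only [mem_inter_iff, mem_ofPred_eq, mem_Ioi, mem_Ioo, and_comm (b := 0 < θ)]
      refine and_congr_right fun hθ ↦ ?_
      rw [ENNReal.ofReal_lt_iff_lt_toReal hθ.le ENNReal.coe_ne_top, ENNReal.coe_toReal]
    simp [hIoo]

/- `lintegral_eq_lintegral_meas_lt` is the version for real-valued functions; here `f` may take the
value `∞`. -/
theorem lintegral_eq_lintegral_measure_ofReal_lt {α : Type*} [MeasurableSpace α] {μ : Measure α}
    [SFinite μ] {f : α → ℝ≥0∞} (hf : Measurable f) :
    ∫⁻ x, f x ∂μ = ∫⁻ θ in Ioi (0 : ℝ), μ {x | ENNReal.ofReal θ < f x} := by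
  let s : Set (α × ℝ) := {z | ENNReal.ofReal z.2 < f z.1}
  have hs : MeasurableSet s := measurableSet_lt (by fun_prop) (by fun_prop)
  calc ∫⁻ x, f x ∂μ
      = ∫⁻ x, volume.restrict (Ioi 0) (Prod.mk x ⁻¹' s) ∂μ := by
        refine lintegral_congr fun x ↦ ?_
        rw [Measure.restrict_apply (hs.preimage measurable_prodMk_left)]
        exact (volume_Ioi_inter_ofReal_lt (f x)).symm
    _ = ∫⁻ θ in Ioi (0 : ℝ), μ {x | ENNReal.ofReal θ < f x} := by
        rw [← Measure.prod_apply hs, Measure.prod_apply_symm hs]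
        rfl

theorem ofReal_mul_lintegral_add_le_of_min_le (hl : l ∈ Icc (0 : ℝ) 1) {f g h : ℝ → ℝ≥0∞}
    (hf : Measurable f) (hg : Measurable g) (hh : Measurable h) (hsup : ⨆ x, f x = ⨆ x, g x)
    (hmin : ∀ x y, min (f x) (g y) ≤ h ((1 - l) * x + l * y)) :
    ENNReal.ofReal (1 - l) * (∫⁻ x, f x) + ENNReal.ofReal l * (∫⁻ x, g x) ≤ ∫⁻ x, h x := by
  simp only [lintegral_eq_lintegral_measure_ofReal_lt, hf, hg, hh]
  rw [← lintegral_const_mul' _ _ ENNReal.ofReal_ne_top,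
    ← lintegral_const_mul' _ _ ENNReal.ofReal_ne_top]
  refine (le_lintegral_add _ _).trans (lintegral_mono fun θ ↦ ?_)
  rcases lt_or_ge (ENNReal.ofReal θ) (⨆ x, f x) with hθ | hθ
  · refine (ofReal_mul_volume_add_le_volume_smul_add hl (measurableSet_lt measurable_const hf)
      (measurableSet_lt measurable_const hg) (lt_iSup_iff.1 hθ)
      (lt_iSup_iff.1 (hθ.trans_eq hsup))).trans (measure_mono ?_)
    rintro _ ⟨_, ⟨x, hx, rfl⟩, _, ⟨y, hy, rfl⟩, rfl⟩
    exact (lt_min hx hy).trans_le (hmin x y)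
  · have hf_empty : {x | ENNReal.ofReal θ < f x} = ∅ :=
      eq_empty_of_forall_notMem fun x ↦ ((le_iSup f x).trans hθ).not_gt
    have hg_empty : {x | ENNReal.ofReal θ < g x} = ∅ :=
      eq_empty_of_forall_notMem fun x ↦ ((le_iSup g x).trans (hsup.ge.trans hθ)).not_gt
    simp [hf_empty, hg_empty]

theorem exists_measurable_le_iSup_ne_top {α : Type*} [MeasurableSpace α] {μ : Measure α}
    {f : α → ℝ≥0∞} {c : ℝ≥0∞} (hc : c < ∫⁻ x, f x ∂μ) :
    ∃ g : α → ℝ≥0∞, Measurable g ∧ g ≤ f ∧ ⨆ x, g x ≠ ∞ ∧ c < ∫⁻ x, g x ∂μ := by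
  simp_rw [lintegral_eq_nnreal, lt_iSup_iff] at hc
  obtain ⟨g, hgf, hcg⟩ := hc
  rw [← SimpleFunc.lintegral_eq_lintegral] at hcg
  obtain ⟨C, hC⟩ := g.finite_range.bddAbove
  have hgC : ⨆ x, (g x : ℝ≥0∞) ≤ C := iSup_le fun x ↦ ENNReal.coe_le_coe.2 (hC ⟨x, rfl⟩)
  exact ⟨fun x ↦ g x, g.measurable.coe_nnreal_ennreal, hgf, ne_top_of_le_ne_top
    ENNReal.coe_ne_top hgC, hcg⟩

theorem convexCombo_pos (hl : l ∈ Icc (0 : ℝ) 1) {a b : ℝ} (ha : 0 < a) (hb : 0 < b) :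
    0 < (1 - l) * a + l * b :=
  convex_Ioi (0 : ℝ) ha hb (sub_nonneg.2 hl.2) hl.1 (sub_add_cancel 1 l)

theorem convexOn_rpow_add_one_div_rpow {k : ℝ} (hk : 0 ≤ k) :
    ConvexOn ℝ (Ici 0 ×ˢ Ioi 0) fun z : ℝ × ℝ ↦ z.1 ^ (k + 1) / z.2 ^ k := by
  refine ⟨(convex_Ici 0).prod (convex_Ioi 0), ?_⟩
  rintro ⟨α, p⟩ ⟨hα, hp⟩ ⟨β, q⟩ ⟨hβ, hq⟩ a b ha hb hab
  simp only [mem_Ici, mem_Ioi] at hα hp hβ hq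
  have perspective : ∀ {x r : ℝ}, 0 ≤ x → 0 < r →
      x ^ (k + 1) / r ^ k = r * (x / r) ^ (k + 1) := fun {x r} hx hr ↦ by
    rw [Real.div_rpow hx hr.le, Real.rpow_add_one hr.ne']
    field_simp
  have hS : 0 < a * p + b * q := convex_Ioi (0 : ℝ) hp hq ha hb hab
  have jensen := (convexOn_rpow (le_add_of_nonneg_left hk)).2 (div_nonneg hα hp.le)
    (div_nonneg hβ hq.le) (div_nonneg (mul_nonneg ha hp.le) hS.le)
    (div_nonneg (mul_nonneg hb hq.le) hS.le) (by rw [← add_div, div_self hS.ne'])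
  simp only [Prod.smul_mk, Prod.mk_add_mk, smul_eq_mul] at jensen ⊢
  rw [perspective hα hp, perspective hβ hq,
    perspective (add_nonneg (mul_nonneg ha hα) (mul_nonneg hb hβ)) hS]
  calc (a * p + b * q) * ((a * α + b * β) / (a * p + b * q)) ^ (k + 1)
      = (a * p + b * q) * (a * p / (a * p + b * q) * (α / p) +
          b * q / (a * p + b * q) * (β / q)) ^ (k + 1) := by
        congr 2
        field_simp
    _ ≤ (a * p + b * q) * (a * p / (a * p + b * q) * (α / p) ^ (k + 1) +
          b * q / (a * p + b * q) * (β / q) ^ (k + 1)) := by gcongr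
    _ = a * (p * (α / p) ^ (k + 1)) + b * (q * (β / q) ^ (k + 1)) := by
        field_simp

theorem exists_eq_ofReal_div_rpow {k : ℝ} (hk : k ≠ 0) {s : ℝ} (hs : 0 < s) {a : ℝ≥0∞}
    (ha₀ : a ≠ 0) (ha : a ≠ ∞) : ∃ α : ℝ, 0 < α ∧ a = ENNReal.ofReal (s / α ^ k) := by
  have hpos := ENNReal.toReal_pos ha₀ ha
  refine ⟨(s / a.toReal) ^ k⁻¹, by positivity, ?_⟩
  rw [Real.rpow_inv_rpow (by positivity) hk, div_div_cancel₀ hs.ne', ENNReal.ofReal_toReal ha]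

theorem ofReal_div_rpow_convexCombo_le (hl : l ∈ Icc (0 : ℝ) 1) {k : ℝ} (hk : 0 ≤ k)
    {s α β p q : ℝ} (hs : 0 < s) (hα : 0 < α) (hβ : 0 < β) (hp : 0 < p) (hq : 0 < q) :
    ENNReal.ofReal (s / ((1 - l) * p + l * q) ^ k) ≤
      ENNReal.ofReal (s / ((1 - l) * α + l * β) ^ (k + 1)) *
        (ENNReal.ofReal (1 - l) *
            (ENNReal.ofReal (s / p ^ k) / ENNReal.ofReal (s / α ^ (k + 1))) +
          ENNReal.ofReal l *
            (ENNReal.ofReal (s / q ^ k) / ENNReal.ofReal (s / β ^ (k + 1)))) := by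
  have hl' : 0 ≤ 1 - l := sub_nonneg.2 hl.2
  have hl₀ := hl.1
  have hαβ := convexCombo_pos hl hα hβ
  have hpq := convexCombo_pos hl hp hq
  have quotient : ∀ {x r : ℝ}, 0 < x → 0 < r →
      ENNReal.ofReal (s / r ^ k) / ENNReal.ofReal (s / x ^ (k + 1)) =
        ENNReal.ofReal (x ^ (k + 1) / r ^ k) := fun {x r} hx hr ↦ by
    rw [← ENNReal.ofReal_div_of_pos (by positivity)]
    congr 1
    field_simp
  have convexity := (convexOn_rpow_add_one_div_rpow hk).2 (x := (α, p)) (y := (β, q))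
    ⟨hα.le, hp⟩ ⟨hβ.le, hq⟩ hl' hl₀ (sub_add_cancel 1 l)
  simp only [Prod.smul_mk, Prod.mk_add_mk, smul_eq_mul] at convexity
  rw [quotient hα hp, quotient hβ hq, ← ENNReal.ofReal_mul hl', ← ENNReal.ofReal_mul hl₀,
    ← ENNReal.ofReal_add (by positivity) (by positivity), ← ENNReal.ofReal_mul (by positivity)]
  refine ENNReal.ofReal_le_ofReal ?_
  calc s / ((1 - l) * p + l * q) ^ k
      = s / ((1 - l) * α + l * β) ^ (k + 1) *
          (((1 - l) * α + l * β) ^ (k + 1) / ((1 - l) * p + l * q) ^ k) := by field_simp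
    _ ≤ _ := by gcongr

/-- `NegPowerMeanLE k l a b c` says that `c` is at least the mean of order `-1/k` of `a` and `b`
with weights `1 - l` and `l`, that is `((1 - l) * a ^ (-1/k) + l * b ^ (-1/k)) ^ (-k) ≤ c`, with the
usual conventions that the mean is `0` if `a = 0` or `b = 0` and is `min a b` if `k = 0`. It is
encoded by lower bounds `s / α ^ k` of `a` and `s / β ^ k` of `b` with a common factor `s`, whose
mean of order `-1/k` is `s / ((1 - l) * α + l * β) ^ k`; this covers `k = 0` and avoids negative
powers of `0` and `∞`. -/
def NegPowerMeanLE (k l : ℝ) (a b c : ℝ≥0∞) : Prop :=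
  ∀ ⦃s α β : ℝ⦄, 0 < s → 0 < α → 0 < β →
    ENNReal.ofReal (s / α ^ k) < a → ENNReal.ofReal (s / β ^ k) < b →
      ENNReal.ofReal (s / ((1 - l) * α + l * β) ^ k) ≤ c

namespace NegPowerMeanLE

variable {k : ℝ} {a b c : ℝ≥0∞}

theorem mono_left {a' b' : ℝ≥0∞} (h : NegPowerMeanLE k l a b c) (ha : a' ≤ a) (hb : b' ≤ b) :
    NegPowerMeanLE k l a' b' c :=
  fun _ _ _ hs hα hβ hsa hsb ↦ h hs hα hβ (hsa.trans_le ha) (hsb.trans_le hb)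

theorem min_div_le (hl : l ∈ Icc (0 : ℝ) 1) (h : NegPowerMeanLE k l a b c) {s α β : ℝ}
    (hs : 0 < s) (hα : 0 < α) (hβ : 0 < β) :
    min (a / ENNReal.ofReal (s / α ^ k)) (b / ENNReal.ofReal (s / β ^ k)) ≤
      c / ENNReal.ofReal (s / ((1 - l) * α + l * β) ^ k) := by
  have hαβ := convexCombo_pos hl hα hβ
  have pos : ∀ {x : ℝ}, 0 < x → ENNReal.ofReal (s / x ^ k) ≠ 0 := fun hx ↦
    (ENNReal.ofReal_pos.2 (by positivity)).ne'
  refine ENNReal.le_of_forall_nnreal_lt fun θ hθ ↦ ?_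
  obtain ⟨hθa, hθb⟩ := lt_min_iff.1 hθ
  rw [ENNReal.lt_div_iff_mul_lt (.inl (pos hα)) (.inl ENNReal.ofReal_ne_top)] at hθa
  rw [ENNReal.lt_div_iff_mul_lt (.inl (pos hβ)) (.inl ENNReal.ofReal_ne_top)] at hθb
  rw [ENNReal.le_div_iff_mul_le (.inl (pos hαβ)) (.inl ENNReal.ofReal_ne_top)]
  rcases eq_zero_or_pos θ with rfl | hθ_pos
  · simp
  · have scale : ∀ x : ℝ, (θ : ℝ≥0∞) * ENNReal.ofReal (s / x ^ k) =
        ENNReal.ofReal (θ * s / x ^ k) := fun x ↦ by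
      rw [mul_div_assoc, ENNReal.ofReal_mul θ.coe_nonneg, ENNReal.ofReal_coe_nnreal]
    rw [scale] at hθa hθb ⊢
    exact h (mul_pos (NNReal.coe_pos.2 hθ_pos) hs) hα hβ hθa hθb

theorem min_le (hl : l ∈ Icc (0 : ℝ) 1) (h : NegPowerMeanLE 0 l a b c) : min a b ≤ c := by
  simpa using h.min_div_le hl one_pos one_pos one_pos

end NegPowerMeanLE

theorem lintegral_fin_succ {X : Type*} [MeasureSpace X] [SigmaFinite (volume : Measure X)] {m : ℕ}
    {f : (Fin (m + 1) → X) → ℝ≥0∞} (hf : Measurable f) :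
    ∫⁻ x, f x = ∫⁻ y : Fin m → X, ∫⁻ s : X, f (Fin.cons s y) := by
  have hmp := (volume_preserving_piFinSuccAbove (fun _ : Fin (m + 1) ↦ X) 0).symm
  rw [← hmp.lintegral_comp hf, Measure.volume_eq_prod, lintegral_prod_symm']
  · simp [MeasurableEquiv.piFinSuccAbove, Fin.insertNthEquiv]
  · exact hf.comp hmp.measurable

namespace NegPowerMeanLE

theorem ofReal_mul_lintegral_div_add_le (hl : l ∈ Icc (0 : ℝ) 1) {k : ℝ} {f g h : ℝ → ℝ≥0∞}
    (hf : Measurable f) (hg : Measurable g) (hh : Measurable h)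
    (hfgh : ∀ x y, NegPowerMeanLE k l (f x) (g y) (h ((1 - l) * x + l * y)))
    {s α β : ℝ} (hs : 0 < s) (hα : 0 < α) (hβ : 0 < β)
    (hfα : ⨆ x, f x = ENNReal.ofReal (s / α ^ k)) (hgβ : ⨆ x, g x = ENNReal.ofReal (s / β ^ k)) :
    ENNReal.ofReal (1 - l) * ((∫⁻ x, f x) / ENNReal.ofReal (s / α ^ k)) +
        ENNReal.ofReal l * ((∫⁻ x, g x) / ENNReal.ofReal (s / β ^ k)) ≤
      (∫⁻ x, h x) / ENNReal.ofReal (s / ((1 - l) * α + l * β) ^ k) := by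
  have iSup_div_eq_one : ∀ {f : ℝ → ℝ≥0∞} {γ : ℝ}, 0 < γ →
      ⨆ x, f x = ENNReal.ofReal (s / γ ^ k) → ⨆ x, f x / ENNReal.ofReal (s / γ ^ k) = 1 :=
    fun hγ hf ↦ by
      rw [← ENNReal.iSup_div, hf, ENNReal.div_self (ENNReal.ofReal_pos.2 (by positivity)).ne'
        ENNReal.ofReal_ne_top]
  simpa only [div_eq_mul_inv, lintegral_mul_const, hf, hg, hh] using
    ofReal_mul_lintegral_add_le_of_min_le hl (hf.div_const _) (hg.div_const _) (hh.div_const _)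
      ((iSup_div_eq_one hα hfα).trans (iSup_div_eq_one hβ hgβ).symm)
      fun x y ↦ (hfgh x y).min_div_le hl hs hα hβ

theorem lintegral_real (hl : l ∈ Icc (0 : ℝ) 1) {k : ℝ} (hk : 0 ≤ k) {f g h : ℝ → ℝ≥0∞}
    (hh : Measurable h)
    (hfgh : ∀ x y, NegPowerMeanLE (k + 1) l (f x) (g y) (h ((1 - l) * x + l * y))) :
    NegPowerMeanLE k l (∫⁻ x, f x) (∫⁻ x, g x) (∫⁻ x, h x) := by
  intro s p q hs hp hq hf hg
  obtain ⟨f₀, hf₀, hf₀f, hf₀_top, hpf₀⟩ := exists_measurable_le_iSup_ne_top hf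
  obtain ⟨g₀, hg₀, hg₀g, hg₀_top, hqg₀⟩ := exists_measurable_le_iSup_ne_top hg
  have iSup_ne_zero : ∀ {f : ℝ → ℝ≥0∞} {c : ℝ≥0∞}, c < ∫⁻ x, f x → ⨆ x, f x ≠ 0 :=
    fun hc h₀ ↦ by simp [ENNReal.iSup_eq_zero.1 h₀] at hc
  obtain ⟨α, hα, hαf₀⟩ := exists_eq_ofReal_div_rpow (k := k + 1) (by positivity) hs
    (iSup_ne_zero hpf₀) hf₀_top
  obtain ⟨β, hβ, hβg₀⟩ := exists_eq_ofReal_div_rpow (k := k + 1) (by positivity) hs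
    (iSup_ne_zero hqg₀) hg₀_top
  let M : ℝ → ℝ≥0∞ := fun γ ↦ ENNReal.ofReal (s / γ ^ (k + 1))
  have M_ne_zero : M ((1 - l) * α + l * β) ≠ 0 := by
    have hαβ := convexCombo_pos hl hα hβ
    exact (ENNReal.ofReal_pos.2 (by positivity)).ne'
  have normalized : ENNReal.ofReal (1 - l) * ((∫⁻ x, f₀ x) / M α) +
      ENNReal.ofReal l * ((∫⁻ x, g₀ x) / M β) ≤ (∫⁻ x, h x) / M ((1 - l) * α + l * β) :=
    ofReal_mul_lintegral_div_add_le hl hf₀ hg₀ hh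
      (fun x y ↦ (hfgh x y).mono_left (hf₀f x) (hg₀g y)) hs hα hβ hαf₀ hβg₀
  calc ENNReal.ofReal (s / ((1 - l) * p + l * q) ^ k)
      ≤ M ((1 - l) * α + l * β) * (ENNReal.ofReal (1 - l) * (ENNReal.ofReal (s / p ^ k) / M α) +
          ENNReal.ofReal l * (ENNReal.ofReal (s / q ^ k) / M β)) :=
        ofReal_div_rpow_convexCombo_le hl hk hs hα hβ hp hq
    _ ≤ M ((1 - l) * α + l * β) * (ENNReal.ofReal (1 - l) * ((∫⁻ x, f₀ x) / M α) +
          ENNReal.ofReal l * ((∫⁻ x, g₀ x) / M β)) := by gcongr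
    _ ≤ M ((1 - l) * α + l * β) * ((∫⁻ x, h x) / M ((1 - l) * α + l * β)) := by gcongr
    _ = ∫⁻ x, h x := ENNReal.mul_div_cancel M_ne_zero ENNReal.ofReal_ne_top

theorem lintegral_fin {m : ℕ} (hl : l ∈ Icc (0 : ℝ) 1) {k : ℝ} (hk : 0 ≤ k)
    {f g h : (Fin m → ℝ) → ℝ≥0∞} (hf : Measurable f) (hg : Measurable g) (hh : Measurable h)
    (hfgh : ∀ x y, NegPowerMeanLE (k + m) l (f x) (g y) (h ((1 - l) • x + l • y))) :
    NegPowerMeanLE k l (∫⁻ x, f x) (∫⁻ x, g x) (∫⁻ x, h x) := by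
  induction m generalizing k with
  | zero =>
    have lintegral_eq : ∀ f : (Fin 0 → ℝ) → ℝ≥0∞, ∫⁻ x, f x = f 0 := fun f ↦ by
      rw [volume_pi, Measure.pi_of_empty _ 0, lintegral_dirac]
    simpa [lintegral_eq] using hfgh 0 0
  | succ m ih =>
    have measurable_cons :
        Measurable fun z : (Fin m → ℝ) × ℝ ↦ (Fin.cons z.2 z.1 : Fin (m + 1) → ℝ) :=
      (continuous_snd.finCons continuous_fst).measurable
    rw [lintegral_fin_succ hf, lintegral_fin_succ hg, lintegral_fin_succ hh]
    refine ih hk (hf.comp measurable_cons).lintegral_prod_right'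
      (hg.comp measurable_cons).lintegral_prod_right'
      (hh.comp measurable_cons).lintegral_prod_right' fun x y ↦ ?_
    refine lintegral_real hl (by positivity) (hh.comp (measurable_cons.comp measurable_prodMk_left))
      fun s t ↦ ?_
    have hcons : (1 - l) • (Fin.cons s x : Fin (m + 1) → ℝ) + l • (Fin.cons t y : Fin (m + 1) → ℝ) =
        Fin.cons ((1 - l) * s + l * t) ((1 - l) • x + l • y) := by
      ext i
      refine Fin.cases ?_ (fun i ↦ ?_) i <;> simp
    simpa only [hcons, Nat.cast_succ, ← add_assoc] using hfgh (Fin.cons s x) (Fin.cons t y)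

theorem lintegral {V : Type*} [NormedAddCommGroup V] [InnerProductSpace ℝ V]
    [FiniteDimensional ℝ V] [MeasurableSpace V] [BorelSpace V] (hl : l ∈ Icc (0 : ℝ) 1) {k : ℝ}
    (hk : 0 ≤ k) {f g h : V → ℝ≥0∞} (hf : Measurable f) (hg : Measurable g) (hh : Measurable h)
    (hfgh : ∀ x y, NegPowerMeanLE (k + finrank ℝ V) l (f x) (g y) (h ((1 - l) • x + l • y))) :
    NegPowerMeanLE k l (∫⁻ x, f x) (∫⁻ x, g x) (∫⁻ x, h x) := by
  have hmp : MeasurePreserving fun x : Fin (finrank ℝ V) → ℝ ↦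
      (stdOrthonormalBasis ℝ V).repr.symm (WithLp.toLp 2 x) :=
    (stdOrthonormalBasis ℝ V).measurePreserving_repr_symm.comp (PiLp.volume_preserving_toLp _)
  rw [← hmp.lintegral_comp hf, ← hmp.lintegral_comp hg, ← hmp.lintegral_comp hh]
  refine lintegral_fin hl hk (hf.comp hmp.measurable) (hg.comp hmp.measurable)
    (hh.comp hmp.measurable) fun x y ↦ ?_
  simpa only [WithLp.toLp_add, WithLp.toLp_smul, map_add, map_smul] using hfgh _ _

theorem of_rpow_le (hl : l ∈ Icc (0 : ℝ) 1) {k : ℝ} (hk : 0 < k) {a b c : ℝ}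
    (hc : 0 < a → 0 < b →
      ((1 - l) * a ^ (-(1 / k)) + l * b ^ (-(1 / k))) ^ (1 / (-(1 / k))) ≤ c) :
    NegPowerMeanLE k l (ENNReal.ofReal a) (ENNReal.ofReal b) (ENNReal.ofReal c) := by
  intro s α β hs hα hβ hsa hsb
  have hsa' := (ENNReal.ofReal_lt_ofReal_iff_of_nonneg (by positivity)).1 hsa
  have hsb' := (ENNReal.ofReal_lt_ofReal_iff_of_nonneg (by positivity)).1 hsb
  have ha : 0 < a := lt_trans (by positivity) hsa'
  have hb : 0 < b := lt_trans (by positivity) hsb'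
  have hαβ := convexCombo_pos hl hα hβ
  have rpow_le : ∀ {x r : ℝ}, 0 < x → s / x ^ k < r → r ^ (-(1 / k)) ≤ s ^ (-(1 / k)) * x :=
    fun {x r} hx hr ↦ by
      calc r ^ (-(1 / k)) ≤ (s / x ^ k) ^ (-(1 / k)) :=
            Real.rpow_le_rpow_of_nonpos (by positivity) hr.le (by simp [hk.le])
        _ = s ^ (-(1 / k)) * x := by
            rw [Real.div_rpow hs.le (by positivity), ← Real.rpow_mul hx.le,
              show k * -(1 / k) = -1 by field_simp, Real.rpow_neg_one, div_inv_eq_mul]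
  refine ENNReal.ofReal_le_ofReal (le_trans ?_ (hc ha hb))
  have hl' : 0 ≤ 1 - l := sub_nonneg.2 hl.2
  have hl₀ := hl.1
  calc s / ((1 - l) * α + l * β) ^ k
      = (s ^ (-(1 / k)) * ((1 - l) * α + l * β)) ^ (1 / (-(1 / k))) := by
        rw [Real.mul_rpow (by positivity) hαβ.le, ← Real.rpow_mul hs.le,
          mul_one_div_cancel (by simp [hk.ne']), Real.rpow_one, one_div_neg_eq_neg_one_div,
          one_div_one_div, Real.rpow_neg hαβ.le, div_eq_mul_inv]
    _ = ((1 - l) * (s ^ (-(1 / k)) * α) + l * (s ^ (-(1 / k)) * β)) ^ (1 / (-(1 / k))) := by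
        ring_nf
    _ ≤ ((1 - l) * a ^ (-(1 / k)) + l * b ^ (-(1 / k))) ^ (1 / (-(1 / k))) := by
        refine Real.rpow_le_rpow_of_nonpos
          (convexCombo_pos hl (by positivity) (by positivity)) ?_ (by simp [hk.le])
        gcongr
        exacts [rpow_le hα hsa', rpow_le hβ hsb']

end NegPowerMeanLE

theorem withDensity_apply_eq_lintegral_mul_indicator {α : Type*} [MeasurableSpace α]
    {μ : Measure α} {ρ : α → ℝ≥0∞} {s : Set α} (hs : MeasurableSet s) :
    μ.withDensity ρ s = ∫⁻ x, ρ x * s.indicator 1 x ∂μ := by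
  rw [withDensity_apply _ hs, ← lintegral_indicator hs]
  simp [← indicator_mul_right]

section Slicing

variable {E : Type*} [NormedAddCommGroup E] [InnerProductSpace ℝ E] [MeasurableSpace E]
  [BorelSpace E] [FiniteDimensional ℝ E] {u : E}

theorem lintegral_eq_lintegral_orthogonal_slices (hu : ‖u‖ = 1) {f : E → ℝ≥0∞}
    (hf : Measurable f) :
    ∫⁻ x, f x = ∫⁻ t : ℝ, ∫⁻ w : (Submodule.span ℝ {u})ᗮ, f (w + t • u) := by
  set K := Submodule.span ℝ {u}
  have hmp : MeasurePreserving
      fun z : K × Kᗮ ↦ K.orthogonalDecomposition.symm (WithLp.toLp 2 z) :=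
    K.orthogonalDecomposition.symm.measurePreserving.comp (WithLp.volume_preserving_toLp _ _)
  have hline : MeasurePreserving (LinearIsometryEquiv.toSpanUnitSingleton (𝕜 := ℝ) u hu) :=
    LinearIsometryEquiv.measurePreserving _
  have hf' : Measurable fun z : K × Kᗮ ↦ f (K.orthogonalDecomposition.symm (WithLp.toLp 2 z)) :=
    hf.comp hmp.measurable
  rw [← hmp.lintegral_comp hf, Measure.volume_eq_prod, lintegral_prod _ hf'.aemeasurable,
    ← hline.lintegral_comp hf'.lintegral_prod_right']
  refine lintegral_congr fun t ↦ lintegral_congr fun w ↦ congrArg f ?_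
  simp [add_comm]

theorem measurable_lintegral_orthogonal_slice {f : E → ℝ≥0∞} (hf : Measurable f) :
    Measurable fun t : ℝ ↦ ∫⁻ w : (Submodule.span ℝ {u})ᗮ, f (w + t • u) :=
  Measurable.lintegral_prod_right'
    (f := fun z : ℝ × (Submodule.span ℝ {u})ᗮ ↦ f (z.2 + z.1 • u)) (hf.comp (by fun_prop))

/-- The Dancs–Uhrin theorem at the critical exponent. -/
theorem ofReal_mul_lintegral_add_le_of_iSup_slices_eq (hl : l ∈ Icc (0 : ℝ) 1) (hu : ‖u‖ = 1)
    {f g h : E → ℝ≥0∞} (hf : Measurable f) (hg : Measurable g) (hh : Measurable h)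
    (hfgh : ∀ x y, NegPowerMeanLE (finrank ℝ E - 1) l (f x) (g y) (h ((1 - l) • x + l • y)))
    (hsup : ⨆ t : ℝ, ∫⁻ w : (Submodule.span ℝ {u})ᗮ, f (w + t • u) =
      ⨆ t : ℝ, ∫⁻ w : (Submodule.span ℝ {u})ᗮ, g (w + t • u)) :
    ENNReal.ofReal (1 - l) * (∫⁻ x, f x) + ENNReal.ofReal l * (∫⁻ x, g x) ≤ ∫⁻ x, h x := by
  simp only [lintegral_eq_lintegral_orthogonal_slices hu, hf, hg, hh]
  refine ofReal_mul_lintegral_add_le_of_min_le hl (measurable_lintegral_orthogonal_slice hf)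
    (measurable_lintegral_orthogonal_slice hg) (measurable_lintegral_orthogonal_slice hh) hsup
    fun s t ↦ ?_
  have measurable_slice : ∀ {f : E → ℝ≥0∞} (t : ℝ), Measurable f →
      Measurable fun w : (Submodule.span ℝ {u})ᗮ ↦ f (w + t • u) :=
    fun t hf ↦ hf.comp (by fun_prop)
  refine (NegPowerMeanLE.lintegral hl le_rfl (measurable_slice s hf) (measurable_slice t hg)
    (measurable_slice _ hh) fun x y ↦ ?_).min_le hl
  have hdim : (finrank ℝ E : ℝ) - 1 = 0 + finrank ℝ (Submodule.span ℝ {u})ᗮ := by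
    have hu₀ : u ≠ 0 := ne_zero_of_norm_ne_zero (hu ▸ one_ne_zero)
    rw [← Submodule.finrank_add_finrank_orthogonal (Submodule.span ℝ {u}),
      finrank_span_singleton hu₀]
    push_cast
    ring
  have hcombo : ((1 - l) • x + l • y : (Submodule.span ℝ {u})ᗮ) + ((1 - l) * s + l * t) • u =
      (1 - l) • (x + s • u) + l • (y + t • u) := by
    push_cast
    module
  rw [hcombo, ← hdim]
  exact hfgh _ _

theorem stmt7_general {n : ℕ} (hE : finrank ℝ E = n) (hn : 2 ≤ n) (hl : l ∈ Icc (0 : ℝ) 1)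
    {φ : E → ℝ} (hφ : Measurable φ)
    (hconc : ∀ x y, 0 < φ x → 0 < φ y →
      ((1 - l) * φ x ^ (-(1 / ((n : ℝ) - 1))) + l * φ y ^ (-(1 / ((n : ℝ) - 1)))) ^
        (1 / (-(1 / ((n : ℝ) - 1)))) ≤ φ ((1 - l) • x + l • y))
    {A B : Set E} (hA : MeasurableSet A) (hB : MeasurableSet B) (hu : ‖u‖ = 1)
    (hsec : ⨆ t : ℝ, ∫⁻ w : (Submodule.span ℝ {u})ᗮ,
        ENNReal.ofReal (φ (w + t • u)) * A.indicator 1 (w + t • u) =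
      ⨆ t : ℝ, ∫⁻ w : (Submodule.span ℝ {u})ᗮ,
        ENNReal.ofReal (φ (w + t • u)) * B.indicator 1 (w + t • u)) :
    ENNReal.ofReal (1 - l) * volume.withDensity (fun x ↦ ENNReal.ofReal (φ x)) A +
        ENNReal.ofReal l * volume.withDensity (fun x ↦ ENNReal.ofReal (φ x)) B ≤
      volume.withDensity (fun x ↦ ENNReal.ofReal (φ x)) ((1 - l) • A + l • B) := by
  set μ := volume.withDensity fun x ↦ ENNReal.ofReal (φ x)
  set S := toMeasurable μ ((1 - l) • A + l • B)
  have hS : MeasurableSet S := measurableSet_toMeasurable _ _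
  have hn' : (0 : ℝ) < n - 1 := sub_pos.2 (by exact_mod_cast hn)
  have measurable_density : ∀ {C : Set E}, MeasurableSet C →
      Measurable fun x ↦ ENNReal.ofReal (φ x) * C.indicator 1 x :=
    fun hC ↦ hφ.ennreal_ofReal.mul (measurable_one.indicator hC)
  rw [← measure_toMeasurable (μ := μ) ((1 - l) • A + l • B),
    withDensity_apply_eq_lintegral_mul_indicator hA,
    withDensity_apply_eq_lintegral_mul_indicator hB,
    withDensity_apply_eq_lintegral_mul_indicator hS]
  refine ofReal_mul_lintegral_add_le_of_iSup_slices_eq hl hu (measurable_density hA)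
    (measurable_density hB) (measurable_density hS) (fun x y ↦ ?_) hsec
  by_cases hx : x ∈ A
  · by_cases hy : y ∈ B
    · have hxy : (1 - l) • x + l • y ∈ S :=
        subset_toMeasurable _ _ (add_mem_add (smul_mem_smul_set hx) (smul_mem_smul_set hy))
      simpa [hx, hy, hxy, hE] using NegPowerMeanLE.of_rpow_le hl hn' (hconc x y)
    · simp [NegPowerMeanLE, hy]
  · simp [NegPowerMeanLE, hx]

end Slicing

/-- Let μ have a (-1/(n-1))-concave density φ on ℝⁿ, and A, B Borel sets
having, for some unit vector u, equal (finite) maximal φ-measure of hyperplane sections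
orthogonal to u. Then μ((1-l)A + lB) ≥ (1-l)μ(A) + lμ(B). -/
theorem stmt7 (n : ℕ) (hn : 2 ≤ n) (φ : EuclideanSpace ℝ (Fin n) → ℝ)
    (hφmeas : Measurable φ) (hφpos : ∀ x, 0 ≤ φ x)
    (hφconc : ∀ x y : EuclideanSpace ℝ (Fin n), 0 < φ x → 0 < φ y →
      ∀ l : ℝ, l ∈ Set.Icc (0:ℝ) 1 →
        φ ((1 - l) • x + l • y) ≥
          ((1 - l) * φ x ^ (-(1 / ((n : ℝ) - 1))) + l * φ y ^ (-(1 / ((n : ℝ) - 1)))) ^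
            (1 / (-(1 / ((n : ℝ) - 1)))))
    (μ : Measure (EuclideanSpace ℝ (Fin n)))
    (hμ : μ = volume.withDensity (fun x => ENNReal.ofReal (φ x)))
    (A B : Set (EuclideanSpace ℝ (Fin n))) (hA : MeasurableSet A) (hB : MeasurableSet B)
    (u : EuclideanSpace ℝ (Fin n)) (hu : ‖u‖ = 1)
    (hfin : (⨆ t : ℝ, ∫⁻ w : ((Submodule.span ℝ {u})ᗮ : Submodule ℝ (EuclideanSpace ℝ (Fin n))),
        (ENNReal.ofReal (φ ((w : EuclideanSpace ℝ (Fin n)) + t • u)) * A.indicator 1 ((w : EuclideanSpace ℝ (Fin n)) + t • u))) ≠ ⊤)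
    (hsec : (⨆ t : ℝ, ∫⁻ w : ((Submodule.span ℝ {u})ᗮ : Submodule ℝ (EuclideanSpace ℝ (Fin n))),
        (ENNReal.ofReal (φ ((w : EuclideanSpace ℝ (Fin n)) + t • u)) * A.indicator 1 ((w : EuclideanSpace ℝ (Fin n)) + t • u))) =
      (⨆ t : ℝ, ∫⁻ w : ((Submodule.span ℝ {u})ᗮ : Submodule ℝ (EuclideanSpace ℝ (Fin n))),
        (ENNReal.ofReal (φ ((w : EuclideanSpace ℝ (Fin n)) + t • u)) * B.indicator 1 ((w : EuclideanSpace ℝ (Fin n)) + t • u))))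
    (l : ℝ) (hl : l ∈ Set.Icc (0:ℝ) 1) :
    μ ((1 - l) • A + l • B) ≥
      ENNReal.ofReal (1 - l) * μ A + ENNReal.ofReal l * μ B := by
  exact hμ ▸ stmt7_general finrank_euclideanSpace_fin hn hl hφmeas
    (fun x y hx hy ↦ hφconc x y hx hy l hl) hA hB hu hsec
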